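/- arXiv:2305.17295 — 2 statements merged into one kernel-verified Lean document; each statement's English description precedes it below -/
import Mathlib

section
/- For every channel q : 𝒳 → PMF(𝒴), the induced channel k : 𝒴 → PMF(𝒴) defined for y with positive Y-probability by k(y)(ỹ) = ∑_{x : g(x) = y} P(X = x | g(X) = y) · q(x)(ỹ) (and arbitrarily for y of zero probability) satisfies (i) the expected distortion of the joint of (distribution of Y, k) equals that of the joint of (p_X, q): E[d_T(h(Y), h(Ỹ))] = E[d_T(f(X), h(Ỹ))], and (ii) I(Y;Ỹ) under (distribution of Y, k) is at most I(X;Ỹ) under (p_X, q). Consequently, R_Y(D;T) ≤ R_XY(D;T) for every D > 0. -/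
open scoped BigOperators

/-- Joint distribution P(a,b) = p(a)·k(a)(b) induced by a source `p` and a channel `k`,
as a real number. -/
noncomputable def jointP {A B : Type*} [Fintype A] [Fintype B] (p : PMF A) (k : A → PMF B)
    (a : A) (b : B) : ℝ :=
  (p a * k a b).toReal

/-- Marginal distribution of the second coordinate of the joint induced by `(p, k)`. -/
noncomputable def margSnd {A B : Type*} [Fintype A] [Fintype B] (p : PMF A) (k : A → PMF B)
    (b : B) : ℝ :=
  ∑ a, jointP p k a b

/-- Mutual information I(A;B) = ∑_{a,b} P(a,b)·log(P(a,b)/(P(a)·P(b))) of the joint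
induced by `(p, k)`; the convention 0·log 0 = 0 holds automatically in Lean. -/
noncomputable def mutualInfo {A B : Type*} [Fintype A] [Fintype B] (p : PMF A)
    (k : A → PMF B) : ℝ :=
  ∑ a, ∑ b, jointP p k a b * Real.log (jointP p k a b / ((p a).toReal * margSnd p k b))

/-- Expected distortion E[d(A,B)] under the joint induced by `(p, k)`. -/
noncomputable def expDist {A B : Type*} [Fintype A] [Fintype B] (p : PMF A) (k : A → PMF B)
    (d : A → B → ℝ) : ℝ :=
  ∑ a, ∑ b, jointP p k a b * d a b

/-- Rate-distortion function: infimum of mutual information over all channels `A → PMF B`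
meeting the expected-distortion constraint `≤ D`. -/
noncomputable def rate {A B : Type*} [Fintype A] [Fintype B] (p : PMF A) (d : A → B → ℝ)
    (D : ℝ) : ℝ :=
  sInf { r : ℝ | ∃ k : A → PMF B, expDist p k d ≤ D ∧ r = mutualInfo p k }

/-- Conditional probability P(A = a | B = b) under the joint induced by `(p, k)`. -/
noncomputable def condProb {A B : Type*} [Fintype A] [Fintype B] (p : PMF A) (k : A → PMF B)
    (a : A) (b : B) : ℝ :=
  jointP p k a b / margSnd p k b

/-!
Under the induced channel, the joint law of `(g X, Ỹ)` is the image of the joint law of `(X, Ỹ)`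
under `g × id`. Hence the expected distortion and the law of `Ỹ` are unchanged, and the log-sum
inequality on each fiber of `g` shows that merging the fibers can only lose mutual information.
Every channel from the source that meets the distortion constraint thus induces a channel from the
features that meets it at no larger rate. Conversely a channel `k` from the features induces itself
from `k ∘ g`, so the two constraints are feasible for the same `D`.
-/

theorem sum_mul_log_sum_div_sum_le {ι : Type*} (s : Finset ι) (u v : ι → ℝ)
    (hu : ∀ i ∈ s, 0 ≤ u i) (hv : ∀ i ∈ s, 0 ≤ v i) (huv : ∀ i ∈ s, v i = 0 → u i = 0) :
    (∑ i ∈ s, u i) * Real.log ((∑ i ∈ s, u i) / ∑ i ∈ s, v i)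
      ≤ ∑ i ∈ s, u i * Real.log (u i / v i) := by
  have mul_div (i) (hi : i ∈ s) : v i * (u i / v i) = u i := mul_div_cancel_of_imp' (huv i hi)
  rcases (Finset.sum_nonneg hv).eq_or_lt with hV | hV
  · have hu_zero (i) (hi : i ∈ s) : u i = 0 :=
      huv i hi ((Finset.sum_eq_zero_iff_of_nonneg hv).1 hV.symm i hi)
    rw [Finset.sum_eq_zero hu_zero, zero_mul,
      Finset.sum_eq_zero fun i hi => by rw [hu_zero i hi, zero_mul]]
  · -- Jensen's inequality for `x ↦ x * log x` at the points `u i / v i` with weights `v i`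
    have jensen := Real.convexOn_mul_log.map_centerMass_le hv hV
      (p := fun i => u i / v i) fun i hi => div_nonneg (hu i hi) (hv i hi)
    simp only [Finset.centerMass, smul_eq_mul, Function.comp_apply, ← mul_assoc] at jensen
    rw [Finset.sum_congr rfl mul_div,
      Finset.sum_congr rfl fun i hi => congrArg (· * Real.log (u i / v i)) (mul_div i hi),
      mul_assoc, mul_le_mul_iff_right₀ (inv_pos.2 hV), inv_mul_eq_div] at jensen
    exact jensen

theorem pmf_sum_toReal_eq_one {A : Type*} [Fintype A] (p : PMF A) : ∑ a, (p a).toReal = 1 := by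
  rw [← ENNReal.toReal_sum fun a _ => p.apply_ne_top a, ← tsum_fintype (L := .unconditional A),
    p.tsum_coe, ENNReal.toReal_one]

section MutualInformation

variable {A B : Type*} [Fintype A] [Fintype B] (p : PMF A) (k : A → PMF B)

theorem jointP_nonneg (a : A) (b : B) : 0 ≤ jointP p k a b :=
  ENNReal.toReal_nonneg

theorem margSnd_nonneg (b : B) : 0 ≤ margSnd p k b :=
  Finset.sum_nonneg fun a _ => jointP_nonneg p k a b

theorem sum_jointP (a : A) : ∑ b, jointP p k a b = (p a).toReal := by
  simp only [jointP, ENNReal.toReal_mul]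
  rw [← Finset.mul_sum, pmf_sum_toReal_eq_one, mul_one]

theorem sum_margSnd : ∑ b, margSnd p k b = 1 := by
  simp only [margSnd]
  rw [Finset.sum_comm]
  simp only [sum_jointP, pmf_sum_toReal_eq_one]

theorem jointP_eq_zero_of_mul_margSnd_eq_zero {a : A} {b : B}
    (h : (p a).toReal * margSnd p k b = 0) : jointP p k a b = 0 := by
  rcases mul_eq_zero.1 h with ha | hb
  · rw [jointP, ENNReal.toReal_mul, ha, zero_mul]
  · exact (Finset.sum_eq_zero_iff_of_nonneg fun a' _ => jointP_nonneg p k a' b).1 hb a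
      (Finset.mem_univ a)

theorem mutualInfo_nonneg : 0 ≤ mutualInfo p k := by
  have joint_total : ∑ i : A × B, jointP p k i.1 i.2 = 1 := by
    simp only [Fintype.sum_prod_type, sum_jointP, pmf_sum_toReal_eq_one]
  have prod_total : ∑ i : A × B, (p i.1).toReal * margSnd p k i.2 = 1 := by
    simp only [Fintype.sum_prod_type, ← Finset.mul_sum, sum_margSnd, mul_one,
      pmf_sum_toReal_eq_one]
  have logsum := sum_mul_log_sum_div_sum_le (Finset.univ : Finset (A × B))
    (fun i => jointP p k i.1 i.2) (fun i => (p i.1).toReal * margSnd p k i.2)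
    (fun i _ => jointP_nonneg p k i.1 i.2)
    (fun i _ => mul_nonneg ENNReal.toReal_nonneg (margSnd_nonneg p k i.2))
    (fun _ _ => jointP_eq_zero_of_mul_margSnd_eq_zero p k)
  rw [joint_total, prod_total, div_one, Real.log_one, mul_zero, Fintype.sum_prod_type] at logsum
  exact logsum

variable {p k}

theorem rate_le_mutualInfo {d : A → B → ℝ} {D : ℝ} (hk : expDist p k d ≤ D) :
    rate p d D ≤ mutualInfo p k :=
  csInf_le ⟨0, by rintro _ ⟨k', -, rfl⟩; exact mutualInfo_nonneg p k'⟩ ⟨k, hk, rfl⟩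

theorem le_rate {d : A → B → ℝ} {D r : ℝ} (hfeas : ∃ k, expDist p k d ≤ D)
    (hr : ∀ k, expDist p k d ≤ D → r ≤ mutualInfo p k) : r ≤ rate p d D := by
  obtain ⟨k₀, hk₀⟩ := hfeas
  refine le_csInf ⟨_, k₀, hk₀, rfl⟩ ?_
  rintro _ ⟨k, hk, rfl⟩
  exact hr k hk

-- `rate` takes the value `sInf ∅ = 0` here, not `+∞`.
theorem rate_eq_zero_of_infeasible {d : A → B → ℝ} {D : ℝ} (h : ¬∃ k, expDist p k d ≤ D) :
    rate p d D = 0 := by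
  have hempty : {r | ∃ k, expDist p k d ≤ D ∧ r = mutualInfo p k} = ∅ :=
    Set.eq_empty_of_forall_notMem fun _ ⟨k, hk, _⟩ => h ⟨k, hk⟩
  rw [rate, hempty, Real.sInf_empty]

end MutualInformation

section InducedChannel

variable {A B C : Type*}

open Classical in
/-- The channel that draws `a` from `p` conditioned on `g a = c` and passes it through `q`, which
witnesses that induced channels exist. Where the condition has probability zero, `a` is drawn from
`p` itself. -/
noncomputable def inducedChannel (p : PMF A) (g : A → C) (q : A → PMF B) (c : C) : PMF B :=
  if hc : ∃ a ∈ g ⁻¹' {c}, a ∈ p.support then (p.filter (g ⁻¹' {c}) hc).bind q else p.bind q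

variable [Fintype A] [DecidableEq C]

theorem pmf_map_apply_eq_sum_fiber (p : PMF A) (g : A → C) (c : C) :
    p.map g c = ∑ a with g a = c, p a := by
  simp only [PMF.map_apply, tsum_fintype, Finset.sum_filter, eq_comm (a := c)]

/-- The channel `k` sends each value `c` that `g` takes with positive probability under `p` to the
law of the output of `q` given `g = c`. Its values at the other `c` are unconstrained. -/
def IsInducedChannel (p : PMF A) (g : A → C) (q : A → PMF B) (k : C → PMF B) : Prop :=
  ∀ c, p.map g c ≠ 0 → ∀ b, k c b = ∑ a with g a = c, p a / p.map g c * q a b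

theorem isInducedChannel_inducedChannel (p : PMF A) (g : A → C) (q : A → PMF B) :
    IsInducedChannel p g q (inducedChannel p g q) := by
  intro c hc b
  obtain ⟨a, ha, hac⟩ := (PMF.mem_support_map_iff g p c).1 hc
  have indicator_fiber (a : A) : (g ⁻¹' {c}).indicator p a = if g a = c then p a else 0 := by
    simp [Set.indicator]
  have fiber_total : (∑' a, if g a = c then p a else 0) = p.map g c := by
    simp only [PMF.map_apply, eq_comm (a := c)]
  rw [inducedChannel, dif_pos ⟨a, hac, ha⟩, PMF.bind_apply, tsum_fintype, Finset.sum_filter]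
  simp only [PMF.filter_apply, indicator_fiber, fiber_total, ite_mul, zero_mul, div_eq_mul_inv]

theorem isInducedChannel_comp (p : PMF A) (g : A → C) (k : C → PMF B) :
    IsInducedChannel p g (k ∘ g) k := by
  intro c hc b
  calc k c b = p.map g c / p.map g c * k c b := by
        rw [ENNReal.div_self hc ((p.map g).apply_ne_top c), one_mul]
    _ = (∑ a with g a = c, p a / p.map g c) * k c b := by
        simp only [div_eq_mul_inv, ← Finset.sum_mul, ← pmf_map_apply_eq_sum_fiber]
    _ = ∑ a with g a = c, p a / p.map g c * (k ∘ g) a b := by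
        rw [Finset.sum_mul]
        exact Finset.sum_congr rfl fun a ha => by
          rw [Function.comp_apply, (Finset.mem_filter.1 ha).2]

namespace IsInducedChannel

variable {p : PMF A} {g : A → C} {q : A → PMF B} {k : C → PMF B}

theorem map_apply_mul_apply (hk : IsInducedChannel p g q k) (c : C) (b : B) :
    p.map g c * k c b = ∑ a with g a = c, p a * q a b := by
  by_cases hc : p.map g c = 0
  · have hp_zero : ∀ a ∈ Finset.univ.filter (g · = c), p a = 0 := by
      rwa [pmf_map_apply_eq_sum_fiber, Finset.sum_eq_zero_iff] at hc
    rw [hc, zero_mul, Finset.sum_eq_zero fun a ha => by rw [hp_zero a ha, zero_mul]]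
  · rw [hk c hc b, Finset.mul_sum]
    refine Finset.sum_congr rfl fun a _ => ?_
    rw [← mul_assoc, ENNReal.mul_div_cancel hc ((p.map g).apply_ne_top c)]

variable [Fintype B] [Fintype C]

theorem jointP_eq_sum_fiber (hk : IsInducedChannel p g q k) (c : C) (b : B) :
    jointP (p.map g) k c b = ∑ a with g a = c, jointP p q a b := by
  rw [jointP, hk.map_apply_mul_apply, ENNReal.toReal_sum fun a _ =>
    ENNReal.mul_ne_top (p.apply_ne_top a) ((q a).apply_ne_top b)]
  rfl

theorem margSnd_eq (hk : IsInducedChannel p g q k) (b : B) :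
    margSnd (p.map g) k b = margSnd p q b := by
  simp only [margSnd, hk.jointP_eq_sum_fiber]
  exact Finset.sum_fiberwise Finset.univ g fun a => jointP p q a b

theorem expDist_eq (hk : IsInducedChannel p g q k) (d : C → B → ℝ) :
    expDist (p.map g) k d = expDist p q fun a => d (g a) := by
  simp only [expDist]
  rw [← Finset.sum_fiberwise Finset.univ g]
  refine Finset.sum_congr rfl fun c _ => ?_
  rw [Finset.sum_comm]
  refine Finset.sum_congr rfl fun b _ => ?_
  rw [hk.jointP_eq_sum_fiber, Finset.sum_mul]
  exact Finset.sum_congr rfl fun a ha => by rw [(Finset.mem_filter.1 ha).2]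

theorem mutualInfo_le (hk : IsInducedChannel p g q k) :
    mutualInfo (p.map g) k ≤ mutualInfo p q := by
  have prod_eq (c : C) (b : B) : (p.map g c).toReal * margSnd (p.map g) k b
      = ∑ a with g a = c, (p a).toReal * margSnd p q b := by
    rw [hk.margSnd_eq, pmf_map_apply_eq_sum_fiber,
      ENNReal.toReal_sum fun a _ => p.apply_ne_top a, Finset.sum_mul]
  simp only [mutualInfo]
  rw [← Finset.sum_fiberwise Finset.univ g]
  refine Finset.sum_le_sum fun c _ => ?_
  rw [Finset.sum_comm]
  refine Finset.sum_le_sum fun b _ => ?_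
  rw [hk.jointP_eq_sum_fiber, prod_eq]
  exact sum_mul_log_sum_div_sum_le _ _ _ (fun a _ => jointP_nonneg p q a b)
    (fun _ _ => mul_nonneg ENNReal.toReal_nonneg (margSnd_nonneg p q b))
    (fun _ _ => jointP_eq_zero_of_mul_margSnd_eq_zero p q)

end IsInducedChannel

end InducedChannel

theorem rate_map_le_rate {A B C : Type*} [Fintype A] [Fintype B] [Fintype C]
    (p : PMF A) (g : A → C) (d : C → B → ℝ) (D : ℝ) :
    rate (p.map g) d D ≤ rate p (fun a => d (g a)) D := by
  classical
  by_cases hfeas : ∃ q, expDist p q (fun a => d (g a)) ≤ D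
  · refine le_rate hfeas fun q hq => ?_
    have hk := isInducedChannel_inducedChannel p g q
    exact (rate_le_mutualInfo ((hk.expDist_eq d).trans_le hq)).trans hk.mutualInfo_le
  · have hinfeas : ¬∃ k, expDist (p.map g) k d ≤ D := fun ⟨k, hk⟩ =>
      hfeas ⟨k ∘ g, ((isInducedChannel_comp p g k).expDist_eq d).symm.trans_le hk⟩
    rw [rate_eq_zero_of_infeasible hfeas, rate_eq_zero_of_infeasible hinfeas]

theorem induced_channel_and_RY_le_RXY_general {A B C : Type*} [Fintype A] [Fintype B] [Fintype C]
    [DecidableEq C] (p : PMF A) (g : A → C) (d : C → B → ℝ) :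
    (∀ (q : A → PMF B) (k : C → PMF B), IsInducedChannel p g q k →
      expDist (p.map g) k d = expDist p q (fun a => d (g a)) ∧
      mutualInfo (p.map g) k ≤ mutualInfo p q) ∧
    ∀ D : ℝ, rate (p.map g) d D ≤ rate p (fun a => d (g a)) D :=
  ⟨fun _ _ hk => ⟨hk.expDist_eq d, hk.mutualInfo_le⟩, rate_map_le_rate p g d⟩

/-- For every channel q : 𝒳 → PMF 𝒴, any channel k : 𝒴 → PMF 𝒴 with
k(y)(ỹ) = ∑_{x : g x = y} P(X = x | g(X) = y) · q(x)(ỹ) on y of positive Y-probability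
satisfies (i) equal expected task distortion and (ii) I(Y;Ỹ) ≤ I(X;Ỹ); consequently
R_Y(D;T) ≤ R_XY(D;T) for every D > 0. Here f = h ∘ g. -/
theorem induced_channel_and_RY_le_RXY
    {𝒳 𝒴 𝒯 : Type*} [Fintype 𝒳] [Fintype 𝒴] [DecidableEq 𝒴] [Fintype 𝒯]
    [Nonempty 𝒳] [Nonempty 𝒴] [Nonempty 𝒯]
    (pX : PMF 𝒳) (g : 𝒳 → 𝒴) (h : 𝒴 → 𝒯)
    (dT : 𝒯 → 𝒯 → ℝ) (hdT : ∀ t t', 0 ≤ dT t t') :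
    (∀ q : 𝒳 → PMF 𝒴, ∀ k : 𝒴 → PMF 𝒴,
      (∀ y : 𝒴, (pX.map g) y ≠ 0 → ∀ ytil : 𝒴,
        k y ytil = ∑ x ∈ Finset.univ.filter (fun x => g x = y),
          (pX x / (pX.map g) y) * q x ytil) →
      expDist (pX.map g) k (fun y ytil => dT (h y) (h ytil))
          = expDist pX q (fun x ytil => dT (h (g x)) (h ytil)) ∧
      mutualInfo (pX.map g) k ≤ mutualInfo pX q) ∧
    (∀ D : ℝ, 0 < D →
      rate (pX.map g) (fun y ytil => dT (h y) (h ytil)) D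
        ≤ rate pX (fun x ytil => dT (h (g x)) (h ytil)) D) := by
  have general := induced_channel_and_RY_le_RXY_general pX g fun y ytil => dT (h y) (h ytil)
  exact ⟨general.1, fun D _ => general.2 D⟩
end

section
/- Suppose that for every ŷ ∈ 𝒴 the value h(ŷ) lies in the range of f (i.e., h(𝒴) ⊆ f(𝒳)). Then for every distortion level D > 0, the minimal achievable rate for model splitting equals the minimal achievable rate for full-input compression: R_X(D;T) = R_Y(D;T). -/
open scoped BigOperators

/-!
Data processing does everything. A reconstruction `x̂` is replaced by the letter `g x̂`, and a
letter `ŷ` by any `x̂` with `f x̂ = h ŷ`; neither replacement changes the distortion or increases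
the information, so the reproduction alphabet may be taken to be `𝒴` in both problems. On the
source side, a channel from `𝒳` is averaged over the fibres of `g`, which makes `(Y, Ŷ)` an image
of `(X, Ŷ)`; conversely, composing a channel from `𝒴` with `g` gives `I(X; Ŷ) = I(Y; Ŷ)`, because
`X → Y → Ŷ` is then a Markov chain.
-/

open MeasureTheory InformationTheory

section PMFMeasure

variable {α β : Type*}

theorem sum_toReal_map_mul [Fintype α] [Fintype β] (q : PMF α) (f : α → β) (c : β → ℝ) :
    ∑ b, (q.map f b).toReal * c b = ∑ a, (q a).toReal * c (f a) := by
  let _ : MeasurableSpace α := ⊤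
  let _ : MeasurableSpace β := ⊤
  have hf : Measurable f := .of_discrete
  simpa only [PMF.integral_eq_sum, smul_eq_mul, PMF.toMeasure_map f q hf] using
    integral_map (μ := q.toMeasure) hf.aemeasurable (f := c) .of_discrete

variable [MeasurableSpace α] [MeasurableSingletonClass α] {q r : PMF α}

theorem toMeasure_absolutelyContinuous (hqr : q.support ⊆ r.support) :
    q.toMeasure ≪ r.toMeasure := fun s hs => by
  rw [PMF.toMeasure_apply_eq_toOuterMeasure, PMF.toOuterMeasure_apply_eq_zero_iff] at hs ⊢
  exact hs.mono_left hqr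

theorem rnDeriv_toMeasure_mul (hqr : q.support ⊆ r.support) (a : α) :
    q.toMeasure.rnDeriv r.toMeasure a * r a = q a := by
  have h := Measure.setLIntegral_rnDeriv (toMeasure_absolutelyContinuous hqr) {a}
  rwa [lintegral_singleton, r.toMeasure_apply_singleton a (.singleton a),
    q.toMeasure_apply_singleton a (.singleton a)] at h

theorem toReal_klDiv_toMeasure [Fintype α] (hqr : q.support ⊆ r.support) :
    (klDiv q.toMeasure r.toMeasure).toReal =
      ∑ a, (q a).toReal * Real.log ((q a).toReal / (r a).toReal) := by
  rw [toReal_klDiv_of_measure_eq (toMeasure_absolutelyContinuous hqr) (by simp),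
    PMF.integral_eq_sum]
  refine Finset.sum_congr rfl fun a _ => ?_
  have hdensity := rnDeriv_toMeasure_mul hqr a
  by_cases ha : r a = 0
  · simp [← hdensity, ha]
  · rw [llr, smul_eq_mul, ← ENNReal.toReal_div,
      (ENNReal.eq_div_iff ha (r.apply_ne_top a)).2 ((mul_comm _ _).trans hdensity)]

end PMFMeasure

section Joint

variable {A B A' B' : Type*}

/-- The joint law of `(a, b)` when `a` is drawn from `p` and `b` from `k a`, as a `PMF` on the
product; `jointP` is its real-valued mass function. -/
noncomputable def jointPMF (p : PMF A) (k : A → PMF B) : PMF (A × B) :=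
  p.bind fun a => (k a).map (Prod.mk a)

theorem jointPMF_apply (p : PMF A) (k : A → PMF B) (a : A) (b : B) :
    jointPMF p k (a, b) = p a * k a b := by
  classical
  rw [jointPMF, PMF.bind_apply, tsum_eq_single a]
  · rw [PMF.map_apply, tsum_eq_single b] <;> simp +contextual [eq_comm]
  · intro a' ha'
    simp [PMF.map_apply, ha'.symm]

theorem map_fst_jointPMF (p : PMF A) (k : A → PMF B) : (jointPMF p k).map Prod.fst = p := by
  simp only [jointPMF, PMF.map_bind, PMF.map_comp, Function.comp_def]
  exact (congrArg p.bind (funext fun a => PMF.map_const (k a) a)).trans p.bind_pure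

theorem map_snd_jointPMF (p : PMF A) (k : A → PMF B) :
    (jointPMF p k).map Prod.snd = p.bind k := by
  simp only [jointPMF, PMF.map_bind, PMF.map_comp, Function.comp_def]
  exact congrArg p.bind (funext fun a => PMF.map_id (k a))

theorem map_prodMap_jointPMF_comp (p : PMF A) (k : A' → PMF B) (g : A → A') (φ : B → B') :
    (jointPMF p (k ∘ g)).map (Prod.map g φ) = jointPMF (p.map g) fun a' => (k a').map φ := by
  simp only [jointPMF, PMF.map_bind, PMF.bind_map, PMF.map_comp, Function.comp_def, Prod.map]

theorem jointPMF_map_right (p : PMF A) (k : A → PMF B) (φ : B → B') :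
    jointPMF p (fun a => (k a).map φ) = (jointPMF p k).map (Prod.map id φ) := by
  simpa only [PMF.map_id, Function.comp_id] using (map_prodMap_jointPMF_comp p k id φ).symm

theorem support_jointPMF_subset (p : PMF A) (k : A → PMF B) :
    (jointPMF p k).support ⊆ (jointPMF p fun _ => p.bind k).support := by
  rintro ⟨a, b⟩ h
  simp only [PMF.mem_support_iff, jointPMF_apply, mul_ne_zero_iff] at h ⊢
  exact ⟨h.1, (PMF.mem_support_bind_iff p k b).2 ⟨a, h⟩⟩

theorem exists_jointPMF_map_fst_eq (q : PMF (A × B)) : ∃ k, jointPMF (q.map Prod.fst) k = q := by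
  classical
  have hmass (a : A) : q.map Prod.fst a = ∑' z, (Prod.fst ⁻¹' {a}).indicator q z := by
    simp [PMF.map_apply, Set.indicator, eq_comm]
  -- Off the support of the first marginal the channel is arbitrary; `q.map Prod.snd` will do.
  let k (a : A) : PMF B :=
    if h : ∃ z ∈ Prod.fst ⁻¹' {a}, z ∈ q.support then (q.filter _ h).map Prod.snd
    else q.map Prod.snd
  refine ⟨k, PMF.ext fun ⟨a, b⟩ => ?_⟩
  rw [jointPMF_apply]
  by_cases h : ∃ z ∈ Prod.fst ⁻¹' {a}, z ∈ q.support
  · have hk : k a b = q.filter _ h (a, b) := by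
      simp only [k, dif_pos h, PMF.map_apply]
      rw [tsum_eq_single (a, b), if_pos rfl]
      rintro ⟨a', b'⟩ hne
      rw [ite_eq_right_iff]
      rintro rfl
      exact q.filter_apply_eq_zero_of_notMem h fun ha => hne (congrArg (·, b) ha)
    have hpos : q.map Prod.fst a ≠ 0 := by
      obtain ⟨z, hz, hzq⟩ := h
      exact (PMF.mem_support_map_iff _ _ _).2 ⟨z, hzq, hz⟩
    rw [hk, PMF.filter_apply, Set.indicator_of_mem (by rfl), ← hmass, mul_left_comm,
      ENNReal.mul_inv_cancel hpos (PMF.apply_ne_top _ a), mul_one]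
  · have hnull : q.map Prod.fst a = 0 := by
      rw [PMF.apply_eq_zero_iff, PMF.mem_support_map_iff]
      exact fun ⟨z, hzq, hz⟩ => h ⟨z, hz, hzq⟩
    have hq : q (a, b) = 0 := by
      rw [PMF.apply_eq_zero_iff]
      exact fun hab => h ⟨(a, b), rfl, hab⟩
    rw [hnull, hq, zero_mul]

theorem exists_jointPMF_map_eq_map_prodMap (p : PMF A) (k : A → PMF B) (g : A → A') (φ : B → B') :
    ∃ k', jointPMF (p.map g) k' = (jointPMF p k).map (Prod.map g φ) := by
  obtain ⟨k', hk'⟩ := exists_jointPMF_map_fst_eq ((jointPMF p k).map (Prod.map g φ))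
  refine ⟨k', ?_⟩
  rwa [PMF.map_comp, Prod.map_fst', ← PMF.map_comp, map_fst_jointPMF] at hk'

end Joint

section RateDistortion

variable {A B A' B' : Type*} [Fintype A] [Fintype B] [Fintype A'] [Fintype B']

theorem jointP_eq_toReal (p : PMF A) (k : A → PMF B) (a : A) (b : B) :
    jointP p k a b = (jointPMF p k (a, b)).toReal := by
  rw [jointP, jointPMF_apply]

theorem margSnd_eq_toReal (p : PMF A) (k : A → PMF B) (b : B) :
    margSnd p k b = (p.bind k b).toReal := by
  simp only [margSnd, jointP]
  rw [PMF.bind_apply, tsum_fintype, ENNReal.toReal_sum fun a _ =>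
    ENNReal.mul_ne_top (p.apply_ne_top a) ((k a).apply_ne_top b)]

theorem expDist_eq_sum_jointPMF (p : PMF A) (k : A → PMF B) (d : A → B → ℝ) :
    expDist p k d = ∑ z, (jointPMF p k z).toReal * d z.1 z.2 := by
  simp only [expDist, jointP_eq_toReal, Fintype.sum_prod_type]

theorem expDist_eq_of_jointPMF_eq_map {p : PMF A} {k : A → PMF B} {p' : PMF A'} {k' : A' → PMF B'}
    {g : A → A'} {φ : B → B'} (hmap : jointPMF p' k' = (jointPMF p k).map (Prod.map g φ))
    (d : A' → B' → ℝ) : expDist p' k' d = expDist p k fun a b => d (g a) (φ b) := by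
  rw [expDist_eq_sum_jointPMF, expDist_eq_sum_jointPMF, hmap]
  exact sum_toReal_map_mul (jointPMF p k) (Prod.map g φ) fun z => d z.1 z.2

theorem mutualInfo_eq_toReal_klDiv [MeasurableSpace A] [MeasurableSingletonClass A]
    [MeasurableSpace B] [MeasurableSingletonClass B] (p : PMF A) (k : A → PMF B) :
    mutualInfo p k =
      (klDiv (jointPMF p k).toMeasure (jointPMF p fun _ => p.bind k).toMeasure).toReal := by
  simp only [toReal_klDiv_toMeasure (support_jointPMF_subset p k), Fintype.sum_prod_type,
    mutualInfo, jointP_eq_toReal, margSnd_eq_toReal, jointPMF_apply p fun _ => p.bind k,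
    ENNReal.toReal_mul]

theorem mutualInfo_le_of_jointPMF_eq_map {p : PMF A} {k : A → PMF B} {p' : PMF A'}
    {k' : A' → PMF B'} {g : A → A'} {φ : B → B'}
    (hmap : jointPMF p' k' = (jointPMF p k).map (Prod.map g φ)) :
    mutualInfo p' k' ≤ mutualInfo p k := by
  let _ : MeasurableSpace A := ⊤
  let _ : MeasurableSpace B := ⊤
  let _ : MeasurableSpace A' := ⊤
  let _ : MeasurableSpace B' := ⊤
  have hfst : p' = p.map g := by
    rw [← map_fst_jointPMF p' k', hmap, PMF.map_comp, Prod.map_fst', ← PMF.map_comp,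
      map_fst_jointPMF]
  have hsnd : p'.bind k' = (p.bind k).map φ := by
    rw [← map_snd_jointPMF p' k', hmap, PMF.map_comp, Prod.map_snd', ← PMF.map_comp,
      map_snd_jointPMF]
  have hprod : jointPMF p' (fun _ => p'.bind k') =
      (jointPMF p fun _ => p.bind k).map (Prod.map g φ) := by
    rw [hsnd, hfst]
    exact (map_prodMap_jointPMF_comp p (fun _ => p.bind k) g φ).symm
  have hmeas : Measurable (Prod.map g φ) := .of_discrete
  have hac := toMeasure_absolutelyContinuous (support_jointPMF_subset p k)
  rw [mutualInfo_eq_toReal_klDiv, mutualInfo_eq_toReal_klDiv, hmap, hprod,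
    ← PMF.toMeasure_map _ _ hmeas, ← PMF.toMeasure_map _ _ hmeas]
  exact ENNReal.toReal_mono (klDiv_ne_top hac .of_finite) (klDiv_map_le _ _ hmeas)

theorem mutualInfo_eq_sum_mul_sum (p : PMF A) (k : A → PMF B) :
    mutualInfo p k = ∑ a, (p a).toReal *
      ∑ b, (k a b).toReal * Real.log ((k a b).toReal / (p.bind k b).toReal) := by
  simp only [mutualInfo, Finset.mul_sum]
  refine Finset.sum_congr rfl fun a _ => Finset.sum_congr rfl fun b _ => ?_
  rw [jointP, ENNReal.toReal_mul, margSnd_eq_toReal, mul_assoc]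
  by_cases ha : (p a).toReal = 0
  · simp only [ha, zero_mul]
  · rw [mul_div_mul_left _ _ ha]

theorem mutualInfo_comp (p : PMF A) (g : A → A') (k : A' → PMF B) :
    mutualInfo p (k ∘ g) = mutualInfo (p.map g) k := by
  rw [mutualInfo_eq_sum_mul_sum, mutualInfo_eq_sum_mul_sum, PMF.bind_map]
  exact (sum_toReal_map_mul p g fun a' =>
    ∑ b, (k a' b).toReal * Real.log ((k a' b).toReal / (p.bind (k ∘ g) b).toReal)).symm

theorem rate_eq_of_dominated {p : PMF A} {d : A → B → ℝ} {p' : PMF A'} {d' : A' → B' → ℝ} {D : ℝ}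
    (h : ∀ k, ∃ k', expDist p' k' d' ≤ expDist p k d ∧ mutualInfo p' k' ≤ mutualInfo p k)
    (h' : ∀ k', ∃ k, expDist p k d ≤ expDist p' k' d' ∧ mutualInfo p k ≤ mutualInfo p' k') :
    rate p d D = rate p' d' D := by
  refine csInf_eq_csInf_of_forall_exists_le ?_ ?_
  · rintro _ ⟨k, hk, rfl⟩
    obtain ⟨k', hdist, hinfo⟩ := h k
    exact ⟨_, ⟨k', hdist.trans hk, rfl⟩, hinfo⟩
  · rintro _ ⟨k', hk', rfl⟩
    obtain ⟨k, hdist, hinfo⟩ := h' k'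
    exact ⟨_, ⟨k, hdist.trans hk', rfl⟩, hinfo⟩

theorem rate_comp_source (p : PMF A) (g : A → A') (d : A' → B → ℝ) (D : ℝ) :
    rate p (fun a => d (g a)) D = rate (p.map g) d D := by
  refine rate_eq_of_dominated (fun k => ?_) fun k' => ⟨k' ∘ g, ?_, (mutualInfo_comp p g k').le⟩
  · obtain ⟨k', hk'⟩ := exists_jointPMF_map_eq_map_prodMap p k g id
    exact ⟨k', (expDist_eq_of_jointPMF_eq_map hk' d).le, mutualInfo_le_of_jointPMF_eq_map hk'⟩
  · have hmap : jointPMF (p.map g) k' = (jointPMF p (k' ∘ g)).map (Prod.map g id) := by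
      simp only [map_prodMap_jointPMF_comp, PMF.map_id]
    exact (expDist_eq_of_jointPMF_eq_map hmap d).ge

theorem rate_comp_reproduction (p : PMF A) (φ : B → B') (d : A → B' → ℝ)
    (hφ : ∀ b', ∃ b, ∀ a, d a (φ b) = d a b') (D : ℝ) :
    rate p (fun a b => d a (φ b)) D = rate p d D := by
  choose s hs using hφ
  refine rate_eq_of_dominated (fun k => ⟨fun a => (k a).map φ, ?_⟩)
    fun k' => ⟨fun a => (k' a).map s, ?_⟩
  · have hmap := jointPMF_map_right p k φ
    exact ⟨(expDist_eq_of_jointPMF_eq_map hmap d).le, mutualInfo_le_of_jointPMF_eq_map hmap⟩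
  · have hmap := jointPMF_map_right p k' s
    refine ⟨?_, mutualInfo_le_of_jointPMF_eq_map hmap⟩
    simp only [expDist_eq_of_jointPMF_eq_map hmap, id, hs, le_refl]

end RateDistortion

theorem full_eq_split_of_range_general {𝒳 𝒴 𝒯 : Type*} [Fintype 𝒳] [Fintype 𝒴]
    (pX : PMF 𝒳) (g : 𝒳 → 𝒴) (h : 𝒴 → 𝒯) (dT : 𝒯 → 𝒯 → ℝ)
    (hrange : ∀ yhat : 𝒴, h yhat ∈ Set.range (fun x => h (g x))) (D : ℝ) :
    rate pX (fun x xhat => dT (h (g x)) (h (g xhat))) D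
      = rate (pX.map g) (fun y yhat => dT (h y) (h yhat)) D := by
  have hletter (yhat : 𝒴) : ∃ xhat, ∀ x, dT (h (g x)) (h (g xhat)) = dT (h (g x)) (h yhat) :=
    (hrange yhat).imp fun _ hx _ => congrArg _ hx
  calc rate pX (fun x xhat => dT (h (g x)) (h (g xhat))) D
      = rate pX (fun x yhat => dT (h (g x)) (h yhat)) D :=
        rate_comp_reproduction pX g (fun x yhat => dT (h (g x)) (h yhat)) hletter D
    _ = rate (pX.map g) (fun y yhat => dT (h y) (h yhat)) D :=
        rate_comp_source pX g (fun y yhat => dT (h y) (h yhat)) D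

/-- If h(𝒴) ⊆ f(𝒳) (with f = h ∘ g), then for every D > 0,
R_X(D;T) = R_Y(D;T). -/
theorem full_eq_split_of_range
    {𝒳 𝒴 𝒯 : Type*} [Fintype 𝒳] [Fintype 𝒴] [Fintype 𝒯]
    [Nonempty 𝒳] [Nonempty 𝒴] [Nonempty 𝒯]
    (pX : PMF 𝒳) (g : 𝒳 → 𝒴) (h : 𝒴 → 𝒯)
    (dT : 𝒯 → 𝒯 → ℝ) (hdT : ∀ t t', 0 ≤ dT t t')
    (hrange : ∀ yhat : 𝒴, h yhat ∈ Set.range (fun x => h (g x)))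
    (D : ℝ) (hD : 0 < D) :
    rate pX (fun x xhat => dT (h (g x)) (h (g xhat))) D
      = rate (pX.map g) (fun y yhat => dT (h y) (h yhat)) D :=
  full_eq_split_of_range_general pX g h dT hrange D
end
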